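/- arXiv:2605.17801 — 4 statements merged into one kernel-verified Lean document; each statement's English description precedes it below -/
import Mathlib

section
/- Let f be a continuously differentiable function on a compact interval [a,b] with a < b. For ε > 0, let N_ε(f) denote the minimal natural number N for which there exist points a = x_0 < x_1 < ... < x_N = b and real constants q_1, ..., q_N such that the sum over k = 1, ..., N of ∫_{x_{k-1}}^{x_k} |f(x) - q_k| dx is at most ε. Then ε · N_ε(f) converges to V(f) as ε tends to 0 from the right. -/
open MeasureTheory

namespace VComp

lemma int_lin (u v A m c : ℝ) :
    ∫ t in u..v, (A + m * (t - c)) = A * (v - u) + m * ((v - c)^2 - (u - c)^2) / 2 := by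
  rw [intervalIntegral.integral_eq_sub_of_hasDerivAt (f := fun t => A * t + m * (t - c)^2 / 2)]
  · ring
  · intro x _
    have h1 : HasDerivAt (fun t : ℝ => t - c) 1 x := (hasDerivAt_id x).sub_const c
    have h2 := ((hasDerivAt_id x).const_mul A).add (((h1.pow 2).const_mul m).div_const 2)
    refine h2.congr_deriv ?_
    simp
    ring
  · exact (by fun_prop : Continuous fun t => A + m * (t - c)).intervalIntegrable _ _

lemma lower_mono (f : ℝ → ℝ) (u v m q : ℝ) (huv : u ≤ v)
    (hc : ContinuousOn f (Set.Icc u v))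
    (hm : ∀ s ∈ Set.Icc u v, ∀ t ∈ Set.Icc u v, s ≤ t → m * (t - s) ≤ f t - f s) :
    m * (v - u)^2 / 4 ≤ ∫ t in u..v, |f t - q| := by
  obtain ⟨c, hcdef⟩ : ∃ c, c = (u + v) / 2 := ⟨_, rfl⟩
  have huc : u ≤ c := by linarith
  have hcv : c ≤ v := by linarith
  have hcm : c ∈ Set.Icc u v := ⟨huc, hcv⟩
  have hc' : ContinuousOn (fun t => |f t - q|) (Set.Icc u v) :=
    (hc.sub continuousOn_const).abs
  have i1 : IntervalIntegrable (fun t => |f t - q|) volume u c := by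
    apply ContinuousOn.intervalIntegrable
    rw [Set.uIcc_of_le huc]
    exact hc'.mono (Set.Icc_subset_Icc le_rfl hcv)
  have i2 : IntervalIntegrable (fun t => |f t - q|) volume c v := by
    apply ContinuousOn.intervalIntegrable
    rw [Set.uIcc_of_le hcv]
    exact hc'.mono (Set.Icc_subset_Icc huc le_rfl)
  rw [← intervalIntegral.integral_add_adjacent_intervals i1 i2]
  have e1 : ∫ t in u..c, ((q - f c) + (-m) * (t - c)) ≤ ∫ t in u..c, |f t - q| := by
    apply intervalIntegral.integral_mono_on huc _ i1
    · intro t ht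
      have := hm t ⟨ht.1, ht.2.trans hcv⟩ c hcm ht.2
      have := neg_abs_le (f t - q)
      linarith
    · exact (by fun_prop : Continuous fun t => (q - f c) + (-m) * (t - c)).intervalIntegrable _ _
  have e2 : ∫ t in c..v, ((f c - q) + m * (t - c)) ≤ ∫ t in c..v, |f t - q| := by
    apply intervalIntegral.integral_mono_on hcv _ i2
    · intro t ht
      have := hm c hcm t ⟨huc.trans ht.1, ht.2⟩ ht.1
      have := le_abs_self (f t - q)
      linarith
    · exact (by fun_prop : Continuous fun t => (f c - q) + m * (t - c)).intervalIntegrable _ _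
  rw [int_lin] at e1 e2
  have : m * (v - u)^2 / 4 = (q - f c) * (c - u) + -m * ((c - c) ^ 2 - (u - c) ^ 2) / 2 +
    ((f c - q) * (v - c) + m * ((v - c) ^ 2 - (c - c) ^ 2) / 2) := by
    rw [hcdef]; ring
  linarith

lemma lower_piece (f f' : ℝ → ℝ) (u v m q : ℝ) (huv : u ≤ v) (hm0 : 0 < m)
    (hd : ∀ x ∈ Set.Icc u v, HasDerivAt f (f' x) x)
    (hcont : ContinuousOn f' (Set.Icc u v))
    (hm : ∀ x ∈ Set.Icc u v, m ≤ |f' x|) :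
    m * (v - u)^2 / 4 ≤ ∫ t in u..v, |f t - q| := by
  have key : ∀ g g' : ℝ → ℝ, (∀ x ∈ Set.Icc u v, HasDerivAt g (g' x) x) →
      (∀ x ∈ Set.Icc u v, m ≤ g' x) → ∀ p,
      m * (v - u)^2 / 4 ≤ ∫ t in u..v, |g t - p| := by
    intro g g' hg hg' p
    have hgc : ContinuousOn g (Set.Icc u v) := fun x hx => (hg x hx).continuousAt.continuousWithinAt
    apply lower_mono g u v m p huv hgc
    intro s hs t ht hst
    refine (convex_Icc u v).mul_sub_le_image_sub_of_le_deriv hgc ?_ ?_ s hs t ht hst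
    · intro x hx
      exact (hg x (interior_subset hx)).differentiableAt.differentiableWithinAt
    · intro x hx
      rw [(hg x (interior_subset hx)).deriv]
      exact hg' x (interior_subset hx)
  have hsign : (∀ x ∈ Set.Icc u v, m ≤ f' x) ∨ (∀ x ∈ Set.Icc u v, m ≤ - f' x) := by
    by_contra hcon
    push Not at hcon
    obtain ⟨⟨x, hx, hx1⟩, ⟨y, hy, hy1⟩⟩ := hcon
    have hx2 : f' x ≤ 0 := by
      by_contra h
      have := hm x hx
      rw [abs_of_pos (not_le.1 h)] at this
      linarith
    have hy2 : 0 ≤ f' y := by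
      by_contra h
      have := hm y hy
      rw [abs_of_neg (not_le.1 h)] at this
      linarith
    obtain ⟨z, hz, hz0⟩ := isPreconnected_Icc.intermediate_value hx hy hcont ⟨hx2, hy2⟩
    have := hm z hz
    rw [hz0] at this
    simp at this
    linarith
  rcases hsign with h | h
  · exact key f f' hd h q
  · have := key (fun t => - f t) (fun t => - f' t) (fun x hx => (hd x hx).neg) h (-q)
    have e : ∀ t, |(- f t) - (-q)| = |f t - q| := by
      intro t
      rw [← abs_neg]; congr 1; ring
    simpa only [e] using this

/-- short pieces -/
lemma lower_short (f f' : ℝ → ℝ) (u v q η l : ℝ) (huv : u ≤ v) (hl : 0 ≤ l)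
    (hd : ∀ x ∈ Set.Icc u v, HasDerivAt f (f' x) x)
    (hcont : ContinuousOn f' (Set.Icc u v))
    (hη : ∀ x ∈ Set.Icc u v, ∀ y ∈ Set.Icc u v, √|f' x| ≤ √|f' y| + η) :
    l * (∫ t in u..v, (√|f' t| - η)) - l^2 ≤ ∫ t in u..v, |f t - q| := by
  obtain ⟨y, hy, hmin⟩ := isCompact_Icc.exists_isMinOn (Set.nonempty_Icc.2 huv) hcont.abs
  have h1 : ∫ t in u..v, (√|f' t| - η) ≤ √|f' y| * (v - u) := by
    have : ∫ t in u..v, (√|f' t| - η) ≤ ∫ t in u..v, √|f' y| := by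
      apply intervalIntegral.integral_mono_on huv
      · apply ContinuousOn.intervalIntegrable
        rw [Set.uIcc_of_le huv]
        exact (hcont.abs.sqrt).sub continuousOn_const
      · exact intervalIntegrable_const
      · intro t ht
        have := hη t ht y hy
        linarith
    rw [intervalIntegral.integral_const, smul_eq_mul, mul_comm] at this
    exact this
  have h2 : |f' y| * (v - u)^2 / 4 ≤ ∫ t in u..v, |f t - q| := by
    rcases (abs_nonneg (f' y)).eq_or_lt with h0 | h0
    · rw [← h0]
      simp
      exact intervalIntegral.integral_nonneg huv (fun _ _ => abs_nonneg _)
    · exact lower_piece f f' u v _ q huv h0 hd hcont (fun x hx => hmin hx)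
  have h3 := mul_le_mul_of_nonneg_left h1 hl
  have h4 := Real.sq_sqrt (abs_nonneg (f' y))
  have h5 : |f' y| * (v - u)^2 / 4 = (√|f' y| * (v - u))^2 / 4 := by
    rw [mul_pow, h4]
  nlinarith [sq_nonneg (√|f' y| * (v - u) / 2 - l)]

/-- arbitrary pieces -/
lemma lower_long (f f' : ℝ → ℝ) (a b q η l δ : ℝ) (hl : 0 ≤ l) (hδ : 0 < δ)
    (hd : ∀ x ∈ Set.Icc a b, HasDerivAt f (f' x) x)
    (hcont : ContinuousOn f' (Set.Icc a b))
    (hη : ∀ x ∈ Set.Icc a b, ∀ y ∈ Set.Icc a b, |x - y| ≤ δ → √|f' x| ≤ √|f' y| + η)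
    (n : ℕ) : ∀ u v : ℝ, a ≤ u → u ≤ v → v ≤ b → v - u ≤ (n + 1) * δ →
    l * (∫ t in u..v, (√|f' t| - η)) - l^2 * (1 + (v - u) / δ) ≤ ∫ t in u..v, |f t - q| := by
  have hshort : ∀ u v : ℝ, a ≤ u → u ≤ v → v ≤ b → v - u ≤ δ →
      l * (∫ t in u..v, (√|f' t| - η)) - l^2 ≤ ∫ t in u..v, |f t - q| := by
    intro u v hu huv hv hle
    have hsub : Set.Icc u v ⊆ Set.Icc a b := Set.Icc_subset_Icc hu hv
    apply lower_short f f' u v q η l huv hl (fun x hx => hd x (hsub hx)) (hcont.mono hsub)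
    intro x hx y hy
    apply hη x (hsub hx) y (hsub hy)
    rw [abs_le]
    constructor <;> linarith [hx.1, hx.2, hy.1, hy.2]
  have hbase : ∀ u v : ℝ, a ≤ u → u ≤ v → v ≤ b → v - u ≤ δ →
      l * (∫ t in u..v, (√|f' t| - η)) - l^2 * (1 + (v - u) / δ) ≤ ∫ t in u..v, |f t - q| := by
    intro u v hu huv hv hle
    have := hshort u v hu huv hv hle
    have h2 : 0 ≤ l^2 * ((v - u) / δ) :=
      mul_nonneg (sq_nonneg _) (div_nonneg (by linarith) hδ.le)
    linarith
  induction n with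
  | zero =>
    intro u v hu huv hv hle
    exact hbase u v hu huv hv (by simpa using hle)
  | succ n ih =>
    intro u v hu huv hv hle
    by_cases hs : v - u ≤ δ
    · exact hbase u v hu huv hv hs
    · have h1 := hshort u (u + δ) hu (by linarith) (by linarith) (by linarith)
      have h2 := ih (u + δ) v (by linarith) (by linarith) hv (by push_cast at hle; linarith)
      have hfc : ContinuousOn f (Set.Icc a b) :=
        fun x hx => (hd x hx).continuousAt.continuousWithinAt
      have ii : ∀ g : ℝ → ℝ, ContinuousOn g (Set.Icc a b) → 
          (∫ t in u..v, g t) = (∫ t in u..(u+δ), g t) + ∫ t in (u+δ)..v, g t := by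
        intro g hg
        rw [intervalIntegral.integral_add_adjacent_intervals]
        · apply ContinuousOn.intervalIntegrable
          rw [Set.uIcc_of_le (by linarith)]
          exact hg.mono (Set.Icc_subset_Icc (by linarith) (by linarith))
        · apply ContinuousOn.intervalIntegrable
          rw [Set.uIcc_of_le (by linarith)]
          exact hg.mono (Set.Icc_subset_Icc (by linarith) (by linarith))
      rw [ii (fun t => |f t - q|) (hfc.sub continuousOn_const).abs,
        ii (fun t => √|f' t| - η) ((hcont.abs.sqrt).sub continuousOn_const)]
      have e : (v - u) / δ = 1 + (v - (u + δ)) / δ := by field_simp; ring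
      rw [e]
      linarith

lemma sum_lower (f f' : ℝ → ℝ) (a b η l δ : ℝ) (hl : 0 ≤ l) (hδ : 0 < δ)
    (hd : ∀ x ∈ Set.Icc a b, HasDerivAt f (f' x) x)
    (hcont : ContinuousOn f' (Set.Icc a b))
    (hη : ∀ x ∈ Set.Icc a b, ∀ y ∈ Set.Icc a b, |x - y| ≤ δ → √|f' x| ≤ √|f' y| + η)
    (x q : ℕ → ℝ) (hx0 : x 0 = a) (n : ℕ) (hx : ∀ k < n, x k < x (k+1)) (hxn : x n ≤ b) :
    a ≤ x n ∧ l * (∫ t in a..(x n), (√|f' t| - η)) - l^2 * (n + (x n - a) / δ) ≤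
      ∑ k ∈ Finset.range n, ∫ t in (x k)..(x (k + 1)), |f t - q (k + 1)| := by
  induction n with
  | zero => simp [hx0]
  | succ n ih =>
    have hlt := hx n (by omega)
    obtain ⟨ha, h⟩ := ih (fun k hk => hx k (by omega)) (by linarith)
    refine ⟨by linarith, ?_⟩
    rw [Finset.sum_range_succ]
    obtain ⟨K, hK⟩ := exists_nat_ge ((x (n+1) - x n) / δ)
    rw [div_le_iff₀ hδ] at hK
    have h2 := lower_long f f' a b (q (n+1)) η l δ hl hδ hd hcont hη K (x n) (x (n+1))
      ha hlt.le hxn (by linarith)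
    have hg : ContinuousOn (fun t => √|f' t| - η) (Set.Icc a b) :=
      (hcont.abs.sqrt).sub continuousOn_const
    have e : (∫ t in a..(x (n+1)), (√|f' t| - η)) =
        (∫ t in a..(x n), (√|f' t| - η)) + ∫ t in (x n)..(x (n+1)), (√|f' t| - η) := by
      rw [intervalIntegral.integral_add_adjacent_intervals]
      · apply ContinuousOn.intervalIntegrable
        rw [Set.uIcc_of_le (by linarith)]
        exact hg.mono (Set.Icc_subset_Icc (by linarith) (by linarith))
      · apply ContinuousOn.intervalIntegrable
        rw [Set.uIcc_of_le (by linarith)]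
        exact hg.mono (Set.Icc_subset_Icc (by linarith) (by linarith))
    rw [e]
    have e2 : (x (n+1) - a) / δ = (x n - a) / δ + (x (n+1) - x n) / δ := by ring
    rw [e2]
    push_cast
    linarith

lemma upper_piece (f f' : ℝ → ℝ) (u v M : ℝ) (huv : u ≤ v)
    (hd : ∀ x ∈ Set.Icc u v, HasDerivAt f (f' x) x)
    (hM : ∀ x ∈ Set.Icc u v, |f' x| ≤ M) :
    ∫ t in u..v, |f t - f ((u+v)/2)| ≤ M * (v - u)^2 / 4 := by
  obtain ⟨c, hcdef⟩ : ∃ c, c = (u + v) / 2 := ⟨_, rfl⟩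
  rw [← hcdef]
  have huc : u ≤ c := by linarith
  have hcv : c ≤ v := by linarith
  have hcm : c ∈ Set.Icc u v := ⟨huc, hcv⟩
  have hc : ContinuousOn f (Set.Icc u v) := fun x hx => (hd x hx).continuousAt.continuousWithinAt
  have hc' : ContinuousOn (fun t => |f t - f c|) (Set.Icc u v) :=
    (hc.sub continuousOn_const).abs
  have i1 : IntervalIntegrable (fun t => |f t - f c|) volume u c := by
    apply ContinuousOn.intervalIntegrable
    rw [Set.uIcc_of_le huc]
    exact hc'.mono (Set.Icc_subset_Icc le_rfl hcv)
  have i2 : IntervalIntegrable (fun t => |f t - f c|) volume c v := by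
    apply ContinuousOn.intervalIntegrable
    rw [Set.uIcc_of_le hcv]
    exact hc'.mono (Set.Icc_subset_Icc huc le_rfl)
  have hlip : ∀ t ∈ Set.Icc u v, |f t - f c| ≤ M * |t - c| := by
    intro t ht
    have := (convex_Icc u v).norm_image_sub_le_of_norm_hasDerivWithin_le
      (f := f) (f' := f') (C := M) (fun x hx => (hd x hx).hasDerivWithinAt)
      (fun x hx => hM x hx) hcm ht
    simpa [Real.norm_eq_abs] using this
  rw [← intervalIntegral.integral_add_adjacent_intervals i1 i2]
  have e1 : ∫ t in u..c, |f t - f c| ≤ ∫ t in u..c, (0 + (-M) * (t - c)) := by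
    apply intervalIntegral.integral_mono_on huc i1
    · exact (by fun_prop : Continuous fun t => 0 + (-M) * (t - c)).intervalIntegrable _ _
    · intro t ht
      have := hlip t ⟨ht.1, ht.2.trans hcv⟩
      rw [abs_of_nonpos (by linarith [ht.2] : t - c ≤ 0)] at this
      linarith
  have e2 : ∫ t in c..v, |f t - f c| ≤ ∫ t in c..v, (0 + M * (t - c)) := by
    apply intervalIntegral.integral_mono_on hcv i2
    · exact (by fun_prop : Continuous fun t => 0 + M * (t - c)).intervalIntegrable _ _
    · intro t ht
      have := hlip t ⟨huc.trans ht.1, ht.2⟩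
      rw [abs_of_nonneg (by linarith [ht.1] : 0 ≤ t - c)] at this
      linarith
  rw [int_lin] at e1 e2
  have : M * (v - u)^2 / 4 = 0 * (c - u) + -M * ((c - c) ^ 2 - (u - c) ^ 2) / 2 +
    (0 * (v - c) + M * ((v - c) ^ 2 - (c - c) ^ 2) / 2) := by
    rw [hcdef]; ring
  linarith

lemma upper_short (f f' : ℝ → ℝ) (u v η : ℝ) (huv : u ≤ v)
    (hd : ∀ x ∈ Set.Icc u v, HasDerivAt f (f' x) x)
    (hcont : ContinuousOn f' (Set.Icc u v))
    (hη : ∀ x ∈ Set.Icc u v, ∀ y ∈ Set.Icc u v, √|f' x| ≤ √|f' y| + η) :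
    ∫ t in u..v, |f t - f ((u+v)/2)| ≤ (∫ t in u..v, (√|f' t| + η))^2 / 4 := by
  obtain ⟨y, hy, hmax⟩ := isCompact_Icc.exists_isMaxOn (Set.nonempty_Icc.2 huv) hcont.abs
  have h1 : √|f' y| * (v - u) ≤ ∫ t in u..v, (√|f' t| + η) := by
    have : ∫ t in u..v, √|f' y| ≤ ∫ t in u..v, (√|f' t| + η) := by
      apply intervalIntegral.integral_mono_on huv
      · exact intervalIntegrable_const
      · apply ContinuousOn.intervalIntegrable
        rw [Set.uIcc_of_le huv]
        exact (hcont.abs.sqrt).add continuousOn_const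
      · intro t ht
        exact hη y hy t ht
    rw [intervalIntegral.integral_const, smul_eq_mul, mul_comm] at this
    exact this
  have h2 := upper_piece f f' u v |f' y| huv hd (fun x hx => hmax hx)
  have h5 : |f' y| * (v - u)^2 / 4 = (√|f' y| * (v - u))^2 / 4 := by
    rw [mul_pow, Real.sq_sqrt (abs_nonneg (f' y))]
  have h6 : 0 ≤ √|f' y| * (v - u) := mul_nonneg (Real.sqrt_nonneg _) (by linarith)
  have h7 := pow_le_pow_left₀ h6 h1 2
  linarith

lemma sum_upper (f f' : ℝ → ℝ) (a b η δ T : ℝ) (hab : a < b) (hη0 : 0 < η)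
    (hd : ∀ x ∈ Set.Icc a b, HasDerivAt f (f' x) x)
    (hcont : ContinuousOn f' (Set.Icc a b))
    (hη : ∀ x ∈ Set.Icc a b, ∀ y ∈ Set.Icc a b, |x - y| ≤ δ → √|f' x| ≤ √|f' y| + η)
    (hT : T = ∫ t in a..b, (√|f' t| + η))
    (n : ℕ) (hn : 0 < n) (hnδ : T / n ≤ η * δ) :
    ∃ (x : ℕ → ℝ) (q : ℕ → ℝ),
        x 0 = a ∧ x n = b ∧ (∀ k < n, x k < x (k + 1)) ∧
        (∑ k ∈ Finset.range n, ∫ t in (x k)..(x (k + 1)), |f t - q (k + 1)|) ≤ T^2 / (4 * n) := by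
  have hg : ContinuousOn (fun t => √|f' t| + η) (Set.Icc a b) :=
    (hcont.abs.sqrt).add continuousOn_const
  have hii : ∀ u ∈ Set.Icc a b, ∀ v ∈ Set.Icc a b,
      IntervalIntegrable (fun t => √|f' t| + η) volume u v := by
    intro u hu v hv
    apply ContinuousOn.intervalIntegrable
    exact hg.mono (Set.uIcc_subset_Icc hu hv)
  have ham : a ∈ Set.Icc a b := ⟨le_rfl, hab.le⟩
  have hbm : b ∈ Set.Icc a b := ⟨hab.le, le_rfl⟩
  obtain ⟨F, hF⟩ : ∃ F : ℝ → ℝ, F = fun x => ∫ t in a..x, (√|f' t| + η) := ⟨_, rfl⟩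
  have hFa : F a = 0 := by simp [hF]
  have hFb : F b = T := by rw [hT, hF]
  have hFd : ∀ u ∈ Set.Icc a b, ∀ v ∈ Set.Icc a b, F v - F u = ∫ t in u..v, (√|f' t| + η) := by
    intro u hu v hv
    rw [hF]
    exact intervalIntegral.integral_interval_sub_left (hii a ham v hv) (hii a ham u hu)
  have hFη : ∀ u ∈ Set.Icc a b, ∀ v ∈ Set.Icc a b, u ≤ v → η * (v - u) ≤ F v - F u := by
    intro u hu v hv huv
    rw [hFd u hu v hv]
    have : ∫ t in u..v, η ≤ ∫ t in u..v, (√|f' t| + η) := by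
      apply intervalIntegral.integral_mono_on huv intervalIntegrable_const (hii u hu v hv)
      intro t _
      linarith [Real.sqrt_nonneg |f' t|]
    rw [intervalIntegral.integral_const, smul_eq_mul, mul_comm] at this
    exact this
  have hFc : ContinuousOn F (Set.Icc a b) := by
    have := intervalIntegral.continuousOn_primitive_interval' (hii a ham b hbm) Set.left_mem_uIcc
    rw [Set.uIcc_of_le hab.le] at this
    rw [hF]
    exact this
  have hT0 : 0 < T := by
    have := hFη a ham b hbm hab.le
    rw [hFa, hFb] at this
    nlinarith [mul_pos hη0 (sub_pos.2 hab)]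
  have hn' : (0:ℝ) < n := by exact_mod_cast hn
  have hex : ∀ k : ℕ, ∃ x ∈ Set.Icc a b, k ≤ n → F x = k * (T / n) := by
    intro k
    by_cases hk : k ≤ n
    · have hk' : (k:ℝ) ≤ n := by exact_mod_cast hk
      have hmem : (k:ℝ) * (T / n) ∈ Set.Icc (F a) (F b) := by
        rw [hFa, hFb]
        constructor
        · positivity
        · calc (k:ℝ) * (T / n) ≤ n * (T / n) := by gcongr
            _ = T := by field_simp
      obtain ⟨x, hx, hxe⟩ := intermediate_value_Icc hab.le hFc hmem
      exact ⟨x, hx, fun _ => hxe⟩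
    · exact ⟨a, ham, fun h => absurd h hk⟩
  choose x hxm hxF using hex
  have hxlt : ∀ k < n, x k < x (k + 1) := by
    intro k hk
    by_contra hcon
    have h1 := hFη _ (hxm (k+1)) _ (hxm k) (not_lt.1 hcon)
    rw [hxF k hk.le, hxF (k+1) hk] at h1
    have h2 : 0 < T / n := by positivity
    push_cast at h1
    nlinarith [mul_nonneg hη0.le (sub_nonneg.2 (not_lt.1 hcon))]
  have hstep : ∀ k < n, F (x (k+1)) - F (x k) = T / n := by
    intro k hk
    rw [hxF k hk.le, hxF (k+1) hk]
    push_cast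
    ring
  refine ⟨x, fun k => f ((x (k-1) + x k) / 2), ?_, ?_, hxlt, ?_⟩
  · have h1 := hFη a ham _ (hxm 0) (hxm 0).1
    rw [hxF 0 (Nat.zero_le _), hFa] at h1
    simp at h1
    have h2 := (hxm 0).1
    nlinarith
  · have h1 := hFη _ (hxm n) b hbm (hxm n).2
    rw [hxF n le_rfl, hFb, mul_div_cancel₀ T hn'.ne'] at h1
    have h2 := (hxm n).2
    nlinarith
  · have hb : ∀ k ∈ Finset.range n, (∫ t in (x k)..(x (k + 1)),
        |f t - f ((x (k + 1 - 1) + x (k+1)) / 2)|) ≤ (T / n)^2 / 4 := by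
      intro k hk
      rw [Finset.mem_range] at hk
      simp only [Nat.add_sub_cancel]
      have hsub : Set.Icc (x k) (x (k+1)) ⊆ Set.Icc a b :=
        Set.Icc_subset_Icc (hxm k).1 (hxm (k+1)).2
      have h1 := hFη _ (hxm k) _ (hxm (k+1)) (hxlt k hk).le
      rw [hstep k hk] at h1
      have h2 : x (k+1) - x k ≤ δ := le_of_mul_le_mul_left (h1.trans hnδ) hη0
      have := upper_short f f' (x k) (x (k+1)) η (hxlt k hk).le (fun y hy => hd y (hsub hy))
        (hcont.mono hsub) (by
          intro y hy z hz
          apply hη y (hsub hy) z (hsub hz)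
          rw [abs_le]
          constructor <;> linarith [hy.1, hy.2, hz.1, hz.2])
      rw [← hFd _ (hxm k) _ (hxm (k+1)), hstep k hk] at this
      exact this
    refine (Finset.sum_le_sum hb).trans (le_of_eq ?_)
    rw [Finset.sum_const, Finset.card_range, nsmul_eq_mul]
    field_simp

lemma modulus (f' : ℝ → ℝ) (a b η : ℝ) (hη : 0 < η) (hcont : ContinuousOn f' (Set.Icc a b)) :
    ∃ δ > 0, ∀ x ∈ Set.Icc a b, ∀ y ∈ Set.Icc a b, |x - y| ≤ δ → √|f' x| ≤ √|f' y| + η := by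
  have h := isCompact_Icc.uniformContinuousOn_of_continuous hcont.abs.sqrt
  rw [Metric.uniformContinuousOn_iff_le] at h
  obtain ⟨δ, hδ, h⟩ := h η hη
  refine ⟨δ, hδ, fun x hx y hy hxy => ?_⟩
  have := h x hx y hy hxy
  rw [Real.dist_eq] at this
  linarith [le_abs_self (√|f' x| - √|f' y|)]

end VComp

/-- For a continuously differentiable `f` on `[a, b]`, letting `N ε` be the minimal number of
pieces of a step function approximating `f` within `L¹` error `ε`, the product `ε * N ε`
converges to the V-complexity `V f = (1/4) (∫_a^b |f'|^(1/2))²` as `ε → 0⁺`. -/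
theorem eps_mul_minimal_pieces_tendsto_V_complexity
    (f f' : ℝ → ℝ) (a b : ℝ) (hab : a < b)
    (hderiv : ∀ x ∈ Set.Icc a b, HasDerivAt f (f' x) x)
    (hcont : ContinuousOn f' (Set.Icc a b))
    (N : ℝ → ℕ)
    (hN : ∀ ε : ℝ, 0 < ε → N ε = sInf {n : ℕ |
      ∃ (x : ℕ → ℝ) (q : ℕ → ℝ),
        x 0 = a ∧ x n = b ∧ (∀ k < n, x k < x (k + 1)) ∧
        (∑ k ∈ Finset.range n, ∫ t in (x k)..(x (k + 1)), |f t - q (k + 1)|) ≤ ε}) :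
    Filter.Tendsto (fun ε : ℝ => ε * (N ε : ℝ)) (nhdsWithin 0 (Set.Ioi 0))
      (nhds ((1 / 4 : ℝ) * (∫ x in a..b, Real.sqrt |f' x|) ^ 2)) := by
  obtain ⟨S, hS⟩ : ∃ S, S = ∫ x in a..b, √|f' x| := ⟨_, rfl⟩
  rw [← hS]
  have hgc : IntervalIntegrable (fun x => √|f' x|) volume a b := by
    apply ContinuousOn.intervalIntegrable
    rw [Set.uIcc_of_le hab.le]
    exact hcont.abs.sqrt
  have hS0 : 0 ≤ S := by
    rw [hS]; exact intervalIntegral.integral_nonneg hab.le (fun _ _ => Real.sqrt_nonneg _)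
  have hplus : ∀ η : ℝ, ∫ t in a..b, (√|f' t| + η) = S + η * (b - a) := by
    intro η
    rw [intervalIntegral.integral_add hgc intervalIntegrable_const, ← hS,
      intervalIntegral.integral_const, smul_eq_mul, mul_comm]
  have hminus : ∀ η : ℝ, ∫ t in a..b, (√|f' t| - η) = S - η * (b - a) := by
    intro η
    rw [intervalIntegral.integral_sub hgc intervalIntegrable_const, ← hS,
      intervalIntegral.integral_const, smul_eq_mul, mul_comm]
  -- upper estimate
  have hup : ∀ η : ℝ, 0 < η → ∃ ε₀ > 0, ∀ ε, 0 < ε → ε < ε₀ →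
      (∃ x q : ℕ → ℝ, x 0 = a ∧ x (N ε) = b ∧ (∀ k < N ε, x k < x (k + 1)) ∧
        (∑ k ∈ Finset.range (N ε), ∫ t in (x k)..(x (k + 1)), |f t - q (k + 1)|) ≤ ε) ∧
      ε * N ε ≤ (S + η * (b - a))^2 / 4 + ε := by
    intro η hη
    obtain ⟨δ, hδ, hmod⟩ := VComp.modulus f' a b η hη hcont
    obtain ⟨T, hT⟩ : ∃ T, T = S + η * (b - a) := ⟨_, rfl⟩
    have hT0 : 0 < T := by
      have := mul_pos hη (sub_pos.2 hab)
      linarith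
    rw [← hT]
    refine ⟨T * (η * δ) / 4, by positivity, ?_⟩
    intro ε hε hε0
    obtain ⟨n, hn⟩ : ∃ n, n = ⌈T^2 / (4 * ε)⌉₊ := ⟨_, rfl⟩
    have hn1 : T^2 / (4 * ε) ≤ n := by rw [hn]; exact Nat.le_ceil _
    have hn2 : (n:ℝ) < T^2 / (4 * ε) + 1 := by rw [hn]; exact Nat.ceil_lt_add_one (by positivity)
    have hnpos : (0:ℝ) < n := lt_of_lt_of_le (by positivity) hn1
    have hn3 : T^2 ≤ n * (4 * ε) := by rwa [div_le_iff₀ (by positivity)] at hn1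
    obtain ⟨x, q, h0, h1, h2, h3⟩ := VComp.sum_upper f f' a b η δ T hab hη hderiv hcont hmod
      (by rw [hplus, hT]) n (by exact_mod_cast hnpos) (by
        rw [div_le_iff₀ hnpos]
        have : T * T ≤ T * (η * δ * n) := by nlinarith
        exact le_of_mul_le_mul_left this hT0)
    have hmem : n ∈ {n : ℕ |
      ∃ (x : ℕ → ℝ) (q : ℕ → ℝ),
        x 0 = a ∧ x n = b ∧ (∀ k < n, x k < x (k + 1)) ∧
        (∑ k ∈ Finset.range n, ∫ t in (x k)..(x (k + 1)), |f t - q (k + 1)|) ≤ ε} := by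
      refine ⟨x, q, h0, h1, h2, h3.trans ?_⟩
      rw [div_le_iff₀ (by positivity)]
      linarith
    constructor
    · have := Nat.sInf_mem ⟨n, hmem⟩
      rw [← hN ε hε] at this
      exact this
    · have hle : N ε ≤ n := by rw [hN ε hε]; exact Nat.sInf_le hmem
      have hle' : (N ε : ℝ) ≤ n := by exact_mod_cast hle
      have h5 : ε * (N ε : ℝ) ≤ ε * (T^2 / (4 * ε) + 1) :=
        mul_le_mul_of_nonneg_left (by linarith) hε.le
      have h6 : ε * (T^2 / (4 * ε) + 1) = T^2 / 4 + ε := by field_simp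
      linarith
  have hlow : ∀ η : ℝ, 0 < η → 0 ≤ S - η * (b - a) → ∃ C ≥ 0, ∃ ε₀ > 0, ∀ ε, 0 < ε → ε < ε₀ →
      (S - η * (b - a))^2 / 4 - C * ε ≤ ε * N ε := by
    intro η hη hS'
    obtain ⟨δ, hδ, hmod⟩ := VComp.modulus f' a b η hη hcont
    obtain ⟨ε₀, hε₀, h⟩ := hup η hη
    have hC : 0 < (b - a) / δ := div_pos (sub_pos.2 hab) hδ
    refine ⟨(b - a) / δ, hC.le, ε₀, hε₀, fun ε hε hlt => ?_⟩
    obtain ⟨⟨x, q, h0, h1, h2, h3⟩, -⟩ := h ε hε hlt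
    obtain ⟨A, hA⟩ : ∃ A, A = (N ε : ℝ) + (b - a) / δ := ⟨_, rfl⟩
    have hA0 : 0 < A := by rw [hA]; positivity
    obtain ⟨S', hS'e⟩ : ∃ S', S' = S - η * (b - a) := ⟨_, rfl⟩
    rw [← hS'e] at hS' ⊢
    have h4 := (VComp.sum_lower f f' a b η (S' / (2 * A)) δ (by positivity) hδ hderiv hcont hmod
      x q h0 (N ε) h2 h1.le).2
    rw [h1, hminus, ← hA, ← hS'e] at h4
    have h5 : S' / (2 * A) * S' - (S' / (2 * A))^2 * A = S'^2 / (4 * A) := by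
      field_simp; ring
    have h6 : S'^2 / (4 * A) ≤ ε := by linarith
    rw [div_le_iff₀ (by positivity)] at h6
    have h7 : ε * (4 * A) = 4 * (ε * N ε + (b - a) / δ * ε) := by rw [hA]; ring
    linarith
  rw [tendsto_order]
  constructor
  · intro y hy
    by_cases hSz : S = 0
    · filter_upwards [self_mem_nhdsWithin] with ε hε
      have : 0 ≤ ε * (N ε : ℝ) := mul_nonneg (le_of_lt hε) (Nat.cast_nonneg _)
      rw [hSz] at hy
      linarith
    · have hSp : 0 < S := lt_of_le_of_ne hS0 (Ne.symm hSz)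
      have c1 : Filter.Tendsto (fun η : ℝ => S - η * (b - a)) (nhdsWithin 0 (Set.Ioi 0)) (nhds S) := by
        have : Continuous fun η : ℝ => S - η * (b - a) := by fun_prop
        have := (this.tendsto 0).mono_left (nhdsWithin_le_nhds (s := Set.Ioi 0))
        simpa using this
      have c2 : Filter.Tendsto (fun η : ℝ => (S - η * (b - a))^2 / 4) (nhdsWithin 0 (Set.Ioi 0))
          (nhds ((1/4) * S^2)) := by
        have := (c1.pow 2).div_const 4
        convert this using 2
        ring
      obtain ⟨η, ⟨hη1, hη2⟩, hη⟩ := (((c1.eventually (lt_mem_nhds hSp)).and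
        (c2.eventually (lt_mem_nhds hy))).and self_mem_nhdsWithin).exists
      obtain ⟨C, hC, ε₀, hε₀, h⟩ := hlow η hη hη1.le
      have c3 : Filter.Tendsto (fun ε : ℝ => (S - η * (b - a))^2 / 4 - C * ε)
          (nhdsWithin 0 (Set.Ioi 0)) (nhds ((S - η * (b - a))^2 / 4)) := by
        have : Continuous fun ε : ℝ => (S - η * (b - a))^2 / 4 - C * ε := by fun_prop
        have := (this.tendsto 0).mono_left (nhdsWithin_le_nhds (s := Set.Ioi 0))
        simpa using this
      filter_upwards [c3.eventually (lt_mem_nhds hη2), Ioo_mem_nhdsGT hε₀] with ε h1 h2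
      exact h1.trans_le (h ε h2.1 h2.2)
  · intro y hy
    have c2 : Filter.Tendsto (fun η : ℝ => (S + η * (b - a))^2 / 4) (nhdsWithin 0 (Set.Ioi 0))
        (nhds ((1/4) * S^2)) := by
      have : Continuous fun η : ℝ => (S + η * (b - a))^2 / 4 := by fun_prop
      have := (this.tendsto 0).mono_left (nhdsWithin_le_nhds (s := Set.Ioi 0))
      convert this using 2
      ring
    obtain ⟨η, hη2, hη⟩ := ((c2.eventually (gt_mem_nhds hy)).and self_mem_nhdsWithin).exists
    obtain ⟨ε₀, hε₀, h⟩ := hup η hη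
    have c3 : Filter.Tendsto (fun ε : ℝ => (S + η * (b - a))^2 / 4 + ε)
        (nhdsWithin 0 (Set.Ioi 0)) (nhds ((S + η * (b - a))^2 / 4)) := by
      have : Continuous fun ε : ℝ => (S + η * (b - a))^2 / 4 + ε := by fun_prop
      have := (this.tendsto 0).mono_left (nhdsWithin_le_nhds (s := Set.Ioi 0))
      simpa using this
    filter_upwards [c3.eventually (gt_mem_nhds hη2), Ioo_mem_nhdsGT hε₀] with ε h1 h2
    exact (h ε h2.1 h2.2).2.trans_lt h1
end

section
/- Let α > 0, let f_α(x) = 1/(1 + e^{−αx}), and let θ : [−1,1] → ℝ be defined by θ(x) = 0 for x < 0, θ(0) = 1/2, and θ(x) = 1 for x > 0. Then ∫_{−1}^{1} |f_α(x) − θ(x)| dx = 1 − (1/α) · log((2 + e^α + e^{−α})/4). -/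
open MeasureTheory

/-- The `L¹` distance on `[-1, 1]` between the sigmoid `f_α(x) = 1/(1 + e^{-αx})` and the
step function `θ` equals `1 - (1/α) log((2 + e^α + e^{-α})/4)`. -/
theorem sigmoid_L1_dist_step (α : ℝ) (hα : 0 < α)
    (θ : ℝ → ℝ)
    (hθ : ∀ x : ℝ, θ x = if x < 0 then 0 else if x = 0 then 1 / 2 else 1) :
    (∫ x in (-1 : ℝ)..1, |1 / (1 + Real.exp (-α * x)) - θ x|) =
      1 - (1 / α) * Real.log ((2 + Real.exp α + Real.exp (-α)) / 4) := by
  have hp : ∀ x : ℝ, 0 < 1 + Real.exp (-α * x) := fun x => by positivity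
  have hc : Continuous (fun x : ℝ => 1 / (1 + Real.exp (-α * x))) := by
    refine Continuous.div continuous_const (by fun_prop) (fun x => (hp x).ne')
  have hc2 : Continuous (fun x : ℝ => 1 - 1 / (1 + Real.exp (-α * x))) := by
    exact continuous_const.sub hc
  have hd : ∀ x : ℝ, HasDerivAt (fun x : ℝ => x + (1 / α) * Real.log (1 + Real.exp (-α * x)))
      (1 / (1 + Real.exp (-α * x))) x := by
    intro x
    have h1 : HasDerivAt (fun x : ℝ => -α * x) (-α * 1) x := (hasDerivAt_id x).const_mul (-α)
    have h2 := (((h1.exp).const_add 1).log (hp x).ne').const_mul (1 / α)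
    have h3 := (hasDerivAt_id x).add h2
    refine h3.congr_deriv ?_
    have := (hp x).ne'
    field_simp
    ring
  have hg : ∀ a b : ℝ, (∫ x in a..b, 1 / (1 + Real.exp (-α * x))) =
      (b + (1 / α) * Real.log (1 + Real.exp (-α * b))) -
      (a + (1 / α) * Real.log (1 + Real.exp (-α * a))) := fun a b =>
    intervalIntegral.integral_eq_sub_of_hasDerivAt (fun x _ => hd x) (hc.intervalIntegrable a b)
  have hne : ∀ᵐ x : ℝ, x ≠ 0 := by
    simp [ae_iff]
  have e1 : ∀ᵐ x : ℝ, x ∈ Set.uIoc (-1 : ℝ) 0 →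
      1 / (1 + Real.exp (-α * x)) = |1 / (1 + Real.exp (-α * x)) - θ x| := by
    filter_upwards [hne] with x hx hm
    rw [Set.uIoc_of_le (by norm_num)] at hm
    have : x < 0 := lt_of_le_of_ne hm.2 hx
    rw [hθ, if_pos this, sub_zero, abs_of_pos (one_div_pos.mpr (hp x))]
  have e2 : ∀ᵐ x : ℝ, x ∈ Set.uIoc (0 : ℝ) 1 →
      1 - 1 / (1 + Real.exp (-α * x)) = |1 / (1 + Real.exp (-α * x)) - θ x| := by
    filter_upwards with x hm
    rw [Set.uIoc_of_le (by norm_num)] at hm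
    have h0 : 1 / (1 + Real.exp (-α * x)) ≤ 1 := by
      rw [div_le_one (hp x)]
      linarith [Real.exp_pos (-α * x)]
    rw [hθ, if_neg (not_lt.mpr hm.1.le), if_neg hm.1.ne', abs_of_nonpos (by linarith)]
    ring
  have i1 := (hc.intervalIntegrable (μ := volume) (-1) 0).congr_ae
    ((ae_restrict_iff' measurableSet_uIoc).mpr e1)
  have i2 := (hc2.intervalIntegrable (μ := volume) 0 1).congr_ae
    ((ae_restrict_iff' measurableSet_uIoc).mpr e2)
  rw [← intervalIntegral.integral_add_adjacent_intervals i1 i2,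
    ← intervalIntegral.integral_congr_ae e1, ← intervalIntegral.integral_congr_ae e2,
    intervalIntegral.integral_sub (by simp) (hc.intervalIntegrable 0 1), hg, hg]
  have hl : (2 + Real.exp α + Real.exp (-α)) / 4 =
      (1 + Real.exp α) * (1 + Real.exp (-α)) / (2 * 2) := by
    have : Real.exp α * Real.exp (-α) = 1 := by rw [← Real.exp_add]; simp
    linear_combination (-1 / 4) * this
  rw [hl, Real.log_div (by positivity) (by norm_num), Real.log_mul (by positivity) (by positivity),
    Real.log_mul (by norm_num) (by norm_num)]
  simp only [mul_zero, Real.exp_zero, mul_neg, mul_one, neg_neg, intervalIntegral.integral_const,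
    smul_eq_mul]
  norm_num
  ring
end

section
/- Define u(x,t) = 1/2 − (2/π) Σ_{k=1}^{∞} (e^{−((2k−1)π/2)² t} / (2k−1)) · sin((2k−1)πx/2), and let u₀ : [−1,1] → ℝ be defined by u₀(x) = 1 for −1 ≤ x < 0, u₀(0) = 1/2, and u₀(x) = 0 for 0 < x ≤ 1. Then ∫_{−1}^{1} |u(x,t) − u₀(x)| dx → 0 as t → 0⁺; that is, u(·,t) converges to the initial datum u₀ in the L¹ norm on [−1,1] as t tends to zero from the right. -/
open MeasureTheory Real

lemma hs_basel : HasSum (fun k : ℕ => 1 / (2 * (k : ℝ) + 1) ^ 2) (π ^ 2 / 8) := by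
  have h := hasSum_zeta_two
  have he : HasSum (fun k : ℕ => (1 : ℝ) / (((2 * k : ℕ) : ℝ)) ^ 2) (π ^ 2 / 24) := by
    have := h.mul_left (1 / 4)
    convert! this using 1
    · funext k
      push_cast
      rw [mul_pow, div_mul_div_comm]
      norm_num
    · ring
  have hsum : Summable (fun k : ℕ => (1 : ℝ) / (((2 * k + 1 : ℕ) : ℝ)) ^ 2) :=
    h.summable.comp_injective (i := fun k : ℕ => 2 * k + 1) (fun a b hab => by
      simp only at hab; omega)
  have ho := hsum.hasSum
  have := (HasSum.even_add_odd (f := fun n : ℕ => (1 : ℝ) / (n : ℝ) ^ 2) he ho).unique h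
  have e : ∑' k : ℕ, (1 : ℝ) / (((2 * k + 1 : ℕ) : ℝ)) ^ 2 = π ^ 2 / 8 := by linarith
  rw [e] at ho
  simpa using ho

lemma hs_cos_int (m : ℤ) (hm : m ≠ 0) : ∫ x in (0 : ℝ)..1, Real.cos ((m : ℝ) * π * x) = 0 := by
  have h0 : (m : ℝ) * π ≠ 0 := mul_ne_zero (by exact_mod_cast hm) pi_ne_zero
  rw [intervalIntegral.integral_comp_mul_left (fun x => Real.cos x) h0, integral_cos]
  simp

lemma hs_cos_half (k : ℕ) : Real.cos ((2 * (k : ℝ) + 1) * π / 2) = 0 :=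
  Real.cos_eq_zero_iff.2 ⟨k, by push_cast; ring⟩

lemma hs_sin_int (k : ℕ) :
    ∫ x in (0 : ℝ)..1, Real.sin ((2 * (k : ℝ) + 1) * π * x / 2) =
      2 / ((2 * (k : ℝ) + 1) * π) := by
  have h0 : (2 * (k : ℝ) + 1) * π / 2 ≠ 0 := by positivity
  have : ∀ x : ℝ, Real.sin ((2 * (k : ℝ) + 1) * π * x / 2)
      = Real.sin (((2 * (k : ℝ) + 1) * π / 2) * x) := fun x => by congr 1; ring
  simp_rw [this]
  rw [intervalIntegral.integral_comp_mul_left (fun x => Real.sin x) h0, integral_sin]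
  simp [hs_cos_half]

lemma hs_orth (j k : ℕ) :
    ∫ x in (0 : ℝ)..1, Real.sin ((2 * (j : ℝ) + 1) * π * x / 2) *
      Real.sin ((2 * (k : ℝ) + 1) * π * x / 2) = if j = k then 1 / 2 else 0 := by
  have : ∀ x : ℝ, Real.sin ((2 * (j : ℝ) + 1) * π * x / 2) *
      Real.sin ((2 * (k : ℝ) + 1) * π * x / 2) =
      (1 / 2) * Real.cos ((((j : ℤ) - (k : ℤ) : ℤ) : ℝ) * π * x) -
      (1 / 2) * Real.cos ((((j : ℤ) + (k : ℤ) + 1 : ℤ) : ℝ) * π * x) := by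
    intro x
    have e1 : (((j : ℤ) - (k : ℤ) : ℤ) : ℝ) * π * x = (2 * (j : ℝ) + 1) * π * x / 2
      - (2 * (k : ℝ) + 1) * π * x / 2 := by push_cast; ring
    have e2 : (((j : ℤ) + (k : ℤ) + 1 : ℤ) : ℝ) * π * x = (2 * (j : ℝ) + 1) * π * x / 2
      + (2 * (k : ℝ) + 1) * π * x / 2 := by push_cast; ring
    rw [e1, e2, Real.cos_sub, Real.cos_add]; ring
  simp_rw [this]
  rw [intervalIntegral.integral_sub
    ((by fun_prop : Continuous _).intervalIntegrable _ _)
    ((by fun_prop : Continuous _).intervalIntegrable _ _),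
    intervalIntegral.integral_const_mul, intervalIntegral.integral_const_mul,
    hs_cos_int _ (by omega : (j : ℤ) + (k : ℤ) + 1 ≠ 0)]
  split_ifs with h
  · subst h; simp
  · rw [hs_cos_int _ (by omega)]; simp

lemma hs_cont (c : ℕ → ℝ) (hc : Summable fun k => |c k|) :
    Continuous fun x : ℝ => ∑' k : ℕ, c k * Real.sin ((2 * (k : ℝ) + 1) * π * x / 2) := by
  refine continuous_tsum (fun k => by fun_prop) hc (fun k x => ?_)
  rw [norm_mul, Real.norm_eq_abs, Real.norm_eq_abs]
  exact mul_le_of_le_one_right (abs_nonneg _) (Real.abs_sin_le_one _)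

lemma hs_summ (c : ℕ → ℝ) (hc : Summable fun k => |c k|) (x : ℝ) :
    Summable fun k : ℕ => c k * Real.sin ((2 * (k : ℝ) + 1) * π * x / 2) := by
  refine Summable.of_norm_bounded hc (fun k => ?_)
  rw [norm_mul, Real.norm_eq_abs, Real.norm_eq_abs]
  exact mul_le_of_le_one_right (abs_nonneg _) (Real.abs_sin_le_one _)

lemma hs_swap (c : ℕ → ℝ) (hc : Summable fun k => |c k|) (g : ℝ → ℝ) (hg : Continuous g) :
    HasSum (fun k : ℕ => c k * ∫ x in (0 : ℝ)..1, Real.sin ((2 * (k : ℝ) + 1) * π * x / 2) * g x)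
      (∫ x in (0 : ℝ)..1,
        (∑' k : ℕ, c k * Real.sin ((2 * (k : ℝ) + 1) * π * x / 2)) * g x) := by
  have := intervalIntegral.hasSum_integral_of_dominated_convergence (μ := volume)
    (a := (0 : ℝ)) (b := 1)
    (F := fun (k : ℕ) x => c k * Real.sin ((2 * (k : ℝ) + 1) * π * x / 2) * g x)
    (f := fun x => (∑' k : ℕ, c k * Real.sin ((2 * (k : ℝ) + 1) * π * x / 2)) * g x)
    (fun k x => |c k| * |g x|)
    (fun k => (by fun_prop : Continuous _).aestronglyMeasurable)
    (fun k => Filter.Eventually.of_forall fun x _ => by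
      rw [norm_mul, norm_mul, Real.norm_eq_abs, Real.norm_eq_abs, Real.norm_eq_abs]
      gcongr
      exact mul_le_of_le_one_right (abs_nonneg _) (Real.abs_sin_le_one _))
    (Filter.Eventually.of_forall fun x _ => hc.mul_right _)
    (by
      simp_rw [tsum_mul_right]
      exact (by fun_prop : Continuous _).intervalIntegrable _ _)
    (Filter.Eventually.of_forall fun x _ => (hs_summ c hc x).hasSum.mul_right _)
  simpa only [mul_assoc, intervalIntegral.integral_const_mul] using this

lemma hs_one (c : ℕ → ℝ) (hc : Summable fun k => |c k|) :
    ∫ x in (0 : ℝ)..1, (∑' k : ℕ, c k * Real.sin ((2 * (k : ℝ) + 1) * π * x / 2)) =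
      ∑' k : ℕ, c k * (2 / ((2 * (k : ℝ) + 1) * π)) := by
  have := (hs_swap c hc (fun _ => 1) continuous_const).tsum_eq
  simp only [mul_one, hs_sin_int] at this
  exact this.symm

lemma hs_sq (c : ℕ → ℝ) (hc : Summable fun k => |c k|) :
    ∫ x in (0 : ℝ)..1, (∑' k : ℕ, c k * Real.sin ((2 * (k : ℝ) + 1) * π * x / 2)) ^ 2 =
      ∑' k : ℕ, c k ^ 2 / 2 := by
  have h1 := (hs_swap c hc _ (hs_cont c hc)).tsum_eq
  simp_rw [pow_two]
  rw [← h1]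
  congr 1
  funext k
  have h2 := (hs_swap c hc (fun x => Real.sin ((2 * (k : ℝ) + 1) * π * x / 2))
    (by fun_prop)).tsum_eq
  simp_rw [hs_orth] at h2
  rw [tsum_eq_single k (fun j hj => by simp [hj])] at h2
  simp_rw [mul_comm (Real.sin _) (∑' _, _)]
  rw [← h2]; simp; ring

lemma hs_coef (t : ℝ) (ht : 0 < t) :
    Summable fun k : ℕ =>
      |Real.exp (-((2 * (k : ℝ) + 1) * π / 2) ^ 2 * t) / (2 * (k : ℝ) + 1)| := by
  refine Summable.of_nonneg_of_le (fun k => abs_nonneg _) (fun k => ?_)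
    (hs_basel.summable.mul_left (4 / (π ^ 2 * t)))
  rw [abs_of_nonneg (by positivity)]
  set n : ℝ := 2 * (k : ℝ) + 1 with hn
  have hn1 : 1 ≤ n := by rw [hn]; linarith [(Nat.cast_nonneg k : (0 : ℝ) ≤ k)]
  have hy : 0 < (n * π / 2) ^ 2 * t := by positivity
  have h1 : Real.exp (-(n * π / 2) ^ 2 * t) ≤ 1 / ((n * π / 2) ^ 2 * t) := by
    rw [neg_mul, Real.exp_neg, ← one_div]
    apply one_div_le_one_div_of_le hy
    linarith [Real.add_one_le_exp ((n * π / 2) ^ 2 * t)]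
  calc _ ≤ Real.exp (-(n * π / 2) ^ 2 * t) := div_le_self (Real.exp_nonneg _) hn1
    _ ≤ _ := h1
    _ = _ := by field_simp; try norm_num

lemma hs_lim (a : ℝ) (ha : 0 < a) :
    Filter.Tendsto (fun t : ℝ => ∑' k : ℕ,
      Real.exp (-((2 * (k : ℝ) + 1) * π / 2) ^ 2 * (a * t)) * (1 / (2 * (k : ℝ) + 1) ^ 2))
      (nhdsWithin 0 (Set.Ioi 0)) (nhds (π ^ 2 / 8)) := by
  rw [← hs_basel.tsum_eq]
  refine tendsto_tsum_of_dominated_convergence hs_basel.summable (fun k => ?_) ?_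
  · apply tendsto_nhdsWithin_of_tendsto_nhds
    have : Continuous fun t : ℝ =>
      Real.exp (-((2 * (k : ℝ) + 1) * π / 2) ^ 2 * (a * t)) * (1 / (2 * (k : ℝ) + 1) ^ 2) := by
      fun_prop
    simpa using this.tendsto 0
  · filter_upwards [self_mem_nhdsWithin] with t ht k
    have ht : 0 < t := ht
    rw [Real.norm_eq_abs, abs_of_nonneg (by positivity)]
    apply mul_le_of_le_one_left (by positivity)
    rw [Real.exp_le_one_iff, neg_mul, neg_nonpos]
    positivity

lemma hs_cs (G : ℝ → ℝ) (hG : Continuous G) :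
    ∫ x in (0 : ℝ)..1, |G x| ≤ Real.sqrt (∫ x in (0 : ℝ)..1, G x ^ 2) := by
  set m := ∫ x in (0 : ℝ)..1, |G x| with hm
  apply Real.le_sqrt_of_sq_le
  have h : 0 ≤ ∫ x in (0 : ℝ)..1, (|G x| - m) ^ 2 :=
    intervalIntegral.integral_nonneg zero_le_one (fun x _ => sq_nonneg _)
  have e : ∀ x, (|G x| - m) ^ 2 = G x ^ 2 - 2 * m * |G x| + m ^ 2 := fun x => by
    rw [sub_sq, sq_abs]; ring
  simp_rw [e] at h
  rw [intervalIntegral.integral_add ((by fun_prop : Continuous _).intervalIntegrable _ _)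
      ((by fun_prop : Continuous _).intervalIntegrable _ _),
    intervalIntegral.integral_sub ((by fun_prop : Continuous _).intervalIntegrable _ _)
      ((by fun_prop : Continuous _).intervalIntegrable _ _),
    intervalIntegral.integral_const_mul, ← hm] at h
  simp at h
  nlinarith

/-- The Fourier-series solution `u(x,t)` of the heat equation converges in `L¹` norm on
`[-1, 1]` to the step-function initial datum `u₀` as `t → 0⁺`. -/
theorem heat_solution_tendsto_initial_datum_L1
    (u : ℝ → ℝ → ℝ)
    (hu : ∀ x t : ℝ, u x t = 1 / 2 - (2 / π) * ∑' k : ℕ,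
      Real.exp (-((2 * (k : ℝ) + 1) * π / 2) ^ 2 * t) / (2 * (k : ℝ) + 1) *
        Real.sin ((2 * (k : ℝ) + 1) * π * x / 2))
    (u₀ : ℝ → ℝ)
    (hu₀ : ∀ x : ℝ, u₀ x = if x < 0 then 1 else if x = 0 then 1 / 2 else 0) :
    Filter.Tendsto (fun t : ℝ => ∫ x in (-1 : ℝ)..1, |u x t - u₀ x|)
      (nhdsWithin 0 (Set.Ioi 0)) (nhds 0) := by
  have hodd : ∀ x t, u (-x) t = 1 - u x t := by
    intro x t
    rw [hu, hu]
    have : ∀ k : ℕ, Real.exp (-((2 * (k : ℝ) + 1) * π / 2) ^ 2 * t) / (2 * (k : ℝ) + 1) *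
        Real.sin ((2 * (k : ℝ) + 1) * π * (-x) / 2) =
        -(Real.exp (-((2 * (k : ℝ) + 1) * π / 2) ^ 2 * t) / (2 * (k : ℝ) + 1) *
        Real.sin ((2 * (k : ℝ) + 1) * π * x / 2)) := fun k => by
      rw [← mul_neg, ← Real.sin_neg]; congr 2; ring
    simp_rw [this, tsum_neg]
    ring
  have hcont : ∀ t, 0 < t → Continuous fun x => u x t := by
    intro t ht
    simp_rw [hu]
    exact continuous_const.sub (continuous_const.mul (hs_cont _ (hs_coef t ht)))
  have hpos : ∀ t, Set.EqOn (fun x => |u x t|) (fun x => |u x t - u₀ x|) (Set.Ioo 0 1) := by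
    intro t x hx
    simp [hu₀, not_lt.2 hx.1.le, hx.1.ne']
  have hposI : ∀ t, ∫ x in (0 : ℝ)..1, |u x t - u₀ x| = ∫ x in (0 : ℝ)..1, |u x t| := by
    intro t
    apply intervalIntegral.integral_congr_Ioo_of_le zero_le_one
    exact (hpos t).symm
  have heven : ∀ t x, |u (-x) t - u₀ (-x)| = |u x t - u₀ x| := by
    intro t x
    rw [hodd, ← abs_neg]
    congr 1
    have : u₀ (-x) = 1 - u₀ x := by
      rw [hu₀, hu₀]
      rcases lt_trichotomy x 0 with h | h | h
      · simp [h, h.ne, h.le]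
      · subst h; norm_num
      · simp [h, h.ne', not_lt.2 h.le]
    rw [this]; ring
  have hint : ∀ t, 0 < t → IntervalIntegrable (fun x => |u x t - u₀ x|) volume 0 1 := by
    intro t ht
    have : IntervalIntegrable (fun x => |u x t|) volume 0 1 :=
      (hcont t ht).abs.intervalIntegrable _ _
    refine this.congr_ae ?_
    rw [Set.uIoc_of_le zero_le_one]
    refine (ae_restrict_iff' measurableSet_Ioc).2 (Filter.Eventually.of_forall fun x hx => ?_)
    simp [hu₀, not_lt.2 hx.1.le, hx.1.ne']
  have hneg : ∀ t, ∫ x in (-1 : ℝ)..0, |u x t - u₀ x| = ∫ x in (0 : ℝ)..1, |u x t| := by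
    intro t
    rw [← hposI]
    have := intervalIntegral.integral_comp_neg (a := (0 : ℝ)) (b := 1) (fun x => |u x t - u₀ x|)
    simp only [heven, neg_zero] at this
    exact this.symm
  have htot : ∀ t, 0 < t → ∫ x in (-1 : ℝ)..1, |u x t - u₀ x| = 2 * ∫ x in (0 : ℝ)..1, |u x t| := by
    intro t ht
    have h2 : IntervalIntegrable (fun x => |u x t - u₀ x|) volume (-1) 0 := by
      have := (hint t ht).comp_sub_left 0
      simp only [zero_sub, heven, sub_zero] at this
      exact this.symm
    rw [← intervalIntegral.integral_add_adjacent_intervals h2 (hint t ht), hneg, hposI]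
    ring
  have hsq : ∀ t, 0 < t → ∫ x in (0 : ℝ)..1, u x t ^ 2 =
      1 / 4 - (4 / π ^ 2) * (∑' k : ℕ, Real.exp (-((2 * (k : ℝ) + 1) * π / 2) ^ 2 * (1 * t)) *
        (1 / (2 * (k : ℝ) + 1) ^ 2)) +
      (2 / π ^ 2) * (∑' k : ℕ, Real.exp (-((2 * (k : ℝ) + 1) * π / 2) ^ 2 * (2 * t)) *
        (1 / (2 * (k : ℝ) + 1) ^ 2)) := by
    intro t ht
    have hc := hs_coef t ht
    have h1 := hs_one _ hc
    have h2 := hs_sq _ hc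
    have hS := hs_cont _ hc
    set S : ℝ → ℝ := fun x => ∑' k : ℕ,
      Real.exp (-((2 * (k : ℝ) + 1) * π / 2) ^ 2 * t) / (2 * (k : ℝ) + 1) *
        Real.sin ((2 * (k : ℝ) + 1) * π * x / 2) with hSdef
    have e : ∀ x, u x t ^ 2 = 1 / 4 - (2 / π) * S x + (4 / π ^ 2) * S x ^ 2 := by
      intro x
      rw [hu]
      change (1 / 2 - 2 / π * S x) ^ 2 = _
      ring
    simp_rw [e]
    rw [intervalIntegral.integral_add ((by fun_prop : Continuous _).intervalIntegrable _ _)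
      ((by fun_prop : Continuous _).intervalIntegrable _ _),
      intervalIntegral.integral_sub ((by fun_prop : Continuous _).intervalIntegrable _ _)
      ((by fun_prop : Continuous _).intervalIntegrable _ _),
      intervalIntegral.integral_const_mul, intervalIntegral.integral_const_mul]
    have h1' : ∫ x in (0 : ℝ)..1, S x = _ := h1
    have h2' : ∫ x in (0 : ℝ)..1, S x ^ 2 = _ := h2
    rw [h1', h2', ← tsum_mul_left, ← tsum_mul_left, ← tsum_mul_left, ← tsum_mul_left]
    congr 1
    · congr 1
      · simp
      · congr 1; funext k
        rw [one_mul]; field_simp; try norm_num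
    · congr 1; funext k
      rw [div_pow, ← Real.exp_nat_mul]
      have : ((2 : ℕ) : ℝ) * (-((2 * (k : ℝ) + 1) * π / 2) ^ 2 * t) =
        -((2 * (k : ℝ) + 1) * π / 2) ^ 2 * (2 * t) := by push_cast; ring
      rw [this]; field_simp; try norm_num
  have hlim : Filter.Tendsto (fun t => 2 * Real.sqrt (∫ x in (0 : ℝ)..1, u x t ^ 2))
      (nhdsWithin 0 (Set.Ioi 0)) (nhds 0) := by
    have h := ((hs_lim 1 one_pos).const_mul (4 / π ^ 2)).const_sub (1 / 4) |>.add
      ((hs_lim 2 two_pos).const_mul (2 / π ^ 2))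
    have h' := (h.sqrt).const_mul 2
    have z : 2 * Real.sqrt (1 / 4 - 4 / π ^ 2 * (π ^ 2 / 8) + 2 / π ^ 2 * (π ^ 2 / 8)) = 0 := by
      have : 1 / 4 - 4 / π ^ 2 * (π ^ 2 / 8) + 2 / π ^ 2 * (π ^ 2 / 8) = 0 := by
        field_simp; norm_num
      rw [this]; simp
    rw [z] at h'
    refine h'.congr' ?_
    filter_upwards [self_mem_nhdsWithin] with t ht
    rw [hsq t ht]
  refine tendsto_of_tendsto_of_tendsto_of_le_of_le' tendsto_const_nhds hlim ?_ ?_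
  · exact Filter.Eventually.of_forall fun t =>
      intervalIntegral.integral_nonneg (by norm_num) (fun x _ => abs_nonneg _)
  · filter_upwards [self_mem_nhdsWithin] with t ht
    rw [htot t ht]
    exact mul_le_mul_of_nonneg_left (hs_cs _ (hcont t ht)) (by norm_num)
end

section
/- Let f be continuously differentiable on a compact interval [a,b], let [c,d] ⊆ [a,b] with c < d, and suppose f is constant on [c,d] (equivalently, f'(x) = 0 for all x ∈ [c,d]). Define f̂ on the interval [a, b − (d − c)] by f̂(x) = f(x) for a ≤ x ≤ c and f̂(x) = f(x + d − c) for c < x ≤ b − (d − c). Then f̂ is continuously differentiable on [a, b − (d − c)] and V(f̂) = V(f). -/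
open MeasureTheory

/-- Excising a subinterval `[c, d]` on which `f` is constant and translating the right-hand
piece to close the gap yields a continuously differentiable function `f̂` on
`[a, b - (d - c)]` with the same V-complexity as `f`. -/
theorem V_complexity_excise_constant_interval
    (f f' : ℝ → ℝ) (a b c d : ℝ)
    (hac : a ≤ c) (hcd : c < d) (hdb : d ≤ b)
    (hderiv : ∀ x ∈ Set.Icc a b, HasDerivAt f (f' x) x)
    (hcont : ContinuousOn f' (Set.Icc a b))
    (hconst : ∀ x ∈ Set.Icc c d, f x = f c)
    (g : ℝ → ℝ)
    (hg₁ : ∀ x ∈ Set.Icc a c, g x = f x)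
    (hg₂ : ∀ x ∈ Set.Ioc c (b - (d - c)), g x = f (x + (d - c))) :
    ∃ g' : ℝ → ℝ,
      (∀ x ∈ Set.Icc a (b - (d - c)),
        HasDerivWithinAt g (g' x) (Set.Icc a (b - (d - c))) x) ∧
      ContinuousOn g' (Set.Icc a (b - (d - c))) ∧
      (1 / 4 : ℝ) * (∫ x in a..(b - (d - c)), Real.sqrt |g' x|) ^ 2 =
        (1 / 4 : ℝ) * (∫ x in a..b, Real.sqrt |f' x|) ^ 2 := by
  have z : ∀ x ∈ Set.Icc c d, f' x = 0 := by
    intro x hx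
    have h1 : HasDerivWithinAt f (f' x) (Set.Icc c d) x :=
      (hderiv x ⟨hac.trans hx.1, hx.2.trans hdb⟩).hasDerivWithinAt
    have h2 : HasDerivWithinAt f 0 (Set.Icc c d) x :=
      (hasDerivWithinAt_const x (Set.Icc c d) (f c)).congr hconst (hconst x hx)
    exact (uniqueDiffOn_Icc hcd x hx).eq_deriv _ h1 h2
  have zc := z c ⟨le_refl _, hcd.le⟩
  have zd := z d ⟨hcd.le, le_refl _⟩
  have hce : c ≤ b - (d - c) := by linarith
  have hU : Set.Icc a (b - (d - c)) = Set.Icc a c ∪ Set.Icc c (b - (d - c)) :=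
    (Set.Icc_union_Icc_eq_Icc hac hce).symm
  have hg₃ : ∀ x ∈ Set.Icc c (b - (d - c)), g x = f (x + (d - c)) := by
    intro x hx
    rcases hx.1.eq_or_lt with h | h
    · subst h
      rw [hg₁ c ⟨hac, le_refl _⟩, add_sub_cancel]
      exact (hconst d ⟨hcd.le, le_refl _⟩).symm
    · exact hg₂ x ⟨h, hx.2⟩
  let G : ℝ → ℝ := fun x => if x ≤ c then f' x else f' (x + (d - c))
  have G₁ : ∀ x ∈ Set.Icc a c, G x = f' x := fun x hx => if_pos hx.2
  have G₂ : ∀ x ∈ Set.Icc c (b - (d - c)), G x = f' (x + (d - c)) := by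
    intro x hx
    rcases hx.1.eq_or_lt with h | h
    · subst h
      rw [G₁ c ⟨hac, le_refl _⟩, add_sub_cancel, zc, zd]
    · exact if_neg (not_le.2 h)
  have hmap : ∀ x ∈ Set.Icc c (b - (d - c)), x + (d - c) ∈ Set.Icc a b := by
    intro x hx
    exact ⟨by linarith [hx.1], by linarith [hx.2]⟩
  have C₁ : ContinuousOn G (Set.Icc a c) :=
    (hcont.mono (Set.Icc_subset_Icc_right (hcd.le.trans hdb))).congr G₁
  have C₂ : ContinuousOn G (Set.Icc c (b - (d - c))) :=
    (hcont.comp (by fun_prop) hmap).congr G₂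
  refine ⟨G, ?_, ?_, ?_⟩
  · intro x _
    rw [hU]
    refine HasDerivWithinAt.union ?_ ?_
    · by_cases hx : x ∈ Set.Icc a c
      · rw [G₁ x hx]
        exact (hderiv x ⟨hx.1, by linarith [hx.2]⟩).hasDerivWithinAt.congr hg₁ (hg₁ x hx)
      · exact HasFDerivWithinAt.of_notMem_closure (by rwa [isClosed_Icc.closure_eq])
    · by_cases hx : x ∈ Set.Icc c (b - (d - c))
      · rw [G₂ x hx]
        exact ((hderiv _ (hmap x hx)).comp_add_const x (d - c)).hasDerivWithinAt.congr
          hg₃ (hg₃ x hx)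
      · exact HasFDerivWithinAt.of_notMem_closure (by rwa [isClosed_Icc.closure_eq])
  · rw [hU]
    exact C₁.union_of_isClosed C₂ isClosed_Icc isClosed_Icc
  · congr 2
    have K : ∀ {h : ℝ → ℝ} {p q : ℝ}, p ≤ q → ContinuousOn h (Set.Icc p q) →
        IntervalIntegrable (fun x => Real.sqrt |h x|) volume p q := by
      intro h p q hpq hh
      exact (hh.abs.sqrt).intervalIntegrable_of_Icc hpq
    have I₁ := K (h := f') hac (hcont.mono (Set.Icc_subset_Icc_right (hcd.le.trans hdb)))
    have I₂ := K (h := f') hcd.le (hcont.mono (Set.Icc_subset_Icc hac hdb))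
    have I₃ := K (h := f') hdb (hcont.mono (Set.Icc_subset_Icc_left (hac.trans hcd.le)))
    rw [← intervalIntegral.integral_add_adjacent_intervals (K hac C₁) (K hce C₂),
      ← intervalIntegral.integral_add_adjacent_intervals (I₁.trans I₂) I₃,
      ← intervalIntegral.integral_add_adjacent_intervals I₁ I₂]
    have e₂ : ∫ x in c..d, Real.sqrt |f' x| = 0 := by
      rw [intervalIntegral.integral_congr (g := fun _ => (0 : ℝ))]
      · simp
      · intro x hx
        rw [Set.uIcc_of_le hcd.le] at hx
        simp [z x hx]
    have e₁ : ∫ x in a..c, Real.sqrt |G x| = ∫ x in a..c, Real.sqrt |f' x| := by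
      apply intervalIntegral.integral_congr
      intro x hx
      rw [Set.uIcc_of_le hac] at hx
      simp only [G₁ x hx]
    have e₃ : ∫ x in c..(b - (d - c)), Real.sqrt |G x| = ∫ x in d..b, Real.sqrt |f' x| := by
      rw [intervalIntegral.integral_congr (g := fun x => Real.sqrt |f' (x + (d - c))|)]
      · rw [intervalIntegral.integral_comp_add_right (fun x => Real.sqrt |f' x|) (d - c)]
        simp
      · intro x hx
        rw [Set.uIcc_of_le hce] at hx
        simp only [G₂ x hx]
    rw [e₁, e₂, e₃, add_zero]
end
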